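/- arXiv:1907.12106 — 4 statements merged into one kernel-verified Lean document; each statement's English description precedes it below -/
import Mathlib

section
/- Let ε, d > 0 be real numbers, let N be an even positive integer, and let G = (V,E) be an N-vertex digraph. Suppose that for every partition of V into two disjoint sets V_1, V_2 with |V_1| = |V_2| = N/2, the number of edges (u,v) ∈ E with u ∈ V_1 and v ∈ V_2 is at least ε·d·N. Then G is ε-far from acyclic: every feedback arc set of G has size at least ε·d·N. -/
/-- A digraph given by an edge relation `E` is acyclic if it has no directed cycle,
i.e. no sequence `v 0, v 1, …, v k` with `k ≥ 1`, `v 0 = v k`, and consecutive edges. -/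
def Acyclic {V : Type*} (E : V → V → Prop) : Prop :=
  ¬ ∃ (k : ℕ) (v : ℕ → V), 1 ≤ k ∧ v 0 = v k ∧ ∀ i < k, E (v i) (v (i + 1))

/-- In a finite acyclic digraph there are successor-closed sets of every size. -/
theorem exists_closed_of_card {V : Type*} [Fintype V] [DecidableEq V] (R : V → V → Prop)
    (hR : Acyclic R) (k : ℕ) (hk : k ≤ Fintype.card V) :
    ∃ A : Finset V, A.card = k ∧ ∀ u ∈ A, ∀ v, R u v → v ∈ A := by
  induction k with
  | zero => exact ⟨∅, by simp⟩
  | succ k ih =>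
    obtain ⟨A, hA, hcl⟩ := ih (by omega)
    have key : ∃ x, x ∉ A ∧ ∀ v, R x v → v ∈ A := by
      by_contra hcon
      push Not at hcon
      have hne : ∃ x, x ∉ A := by
        by_contra h
        push Not at h
        have : A = Finset.univ := Finset.eq_univ_iff_forall.mpr h
        rw [this, Finset.card_univ] at hA
        omega
      obtain ⟨x0, hx0⟩ := hne
      choose f hf1 hf2 using hcon
      let g : {x // x ∉ A} → {x // x ∉ A} := fun x => ⟨f x.1 x.2, hf2 x.1 x.2⟩
      let w : ℕ → V := fun n => (g^[n] ⟨x0, hx0⟩).1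
      have hw : ∀ n, R (w n) (w (n + 1)) := by
        intro n
        simp only [w, Function.iterate_succ_apply']
        exact hf1 _ _
      obtain ⟨a, b, hab, heq⟩ := Finite.exists_ne_map_eq_of_infinite w
      rcases lt_or_gt_of_ne hab with h | h
      · refine hR ⟨b - a, fun i => w (a + i), by omega, ?_, fun i _ => hw (a + i)⟩
        simp only [Nat.add_zero, Nat.add_sub_cancel' h.le, heq]
      · refine hR ⟨a - b, fun i => w (b + i), by omega, ?_, fun i _ => hw (b + i)⟩
        simp only [Nat.add_zero, Nat.add_sub_cancel' h.le, heq]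
    obtain ⟨x, hx, hxA⟩ := key
    refine ⟨insert x A, by rw [Finset.card_insert_of_notMem hx, hA], ?_⟩
    intro u hu v huv
    rcases Finset.mem_insert.mp hu with rfl | hu
    · exact Finset.mem_insert_of_mem (hxA v huv)
    · exact Finset.mem_insert_of_mem (hcl u hu v huv)

/-- If `N = |V|` is even and positive and every balanced partition
`(V₁, V₂)` of `V` has at least `ε·d·N` edges from `V₁` to `V₂`, then `G` is `ε`-far
from acyclic: every feedback arc set has size at least `ε·d·N`. -/
theorem balanced_cuts_imply_far_from_acyclic {V : Type*} [Fintype V] [DecidableEq V]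
    (ε d : ℝ) (hε : 0 < ε) (hd : 0 < d)
    (hNpos : 0 < Fintype.card V) (hNeven : Even (Fintype.card V))
    (E : Finset (V × V)) (hirr : ∀ e ∈ E, e.1 ≠ e.2)
    (hcut : ∀ V₁ V₂ : Finset V, Disjoint V₁ V₂ → V₁ ∪ V₂ = Finset.univ →
      V₁.card = Fintype.card V / 2 → V₂.card = Fintype.card V / 2 →
      ε * d * (Fintype.card V : ℝ)
        ≤ ((E.filter (fun e => e.1 ∈ V₁ ∧ e.2 ∈ V₂)).card : ℝ)) :
    ∀ S ⊆ E, Acyclic (fun u v => (u, v) ∈ E \ S) →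
      ε * d * (Fintype.card V : ℝ) ≤ (S.card : ℝ) := by
  intro S _ hac
  obtain ⟨A, hA, hcl⟩ := exists_closed_of_card _ hac (Fintype.card V / 2) (Nat.div_le_self _ _)
  refine (hcut A Aᶜ disjoint_compl_right (Finset.union_compl A) hA ?_).trans ?_
  · rw [Finset.card_compl, hA]
    obtain ⟨m, hm⟩ := hNeven
    omega
  · norm_cast
    apply Finset.card_le_card
    rintro ⟨u, v⟩ he
    simp only [Finset.mem_filter, Finset.mem_compl] at he
    by_contra hS
    exact he.2.2 (hcl u he.2.1 v (Finset.mem_sdiff.mpr ⟨he.1, hS⟩))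
end

section
/- Let G = (V,E) be a finite digraph equipped with a Bender–Ron coloring c : V → {0,1,…,L} that additionally satisfies the sink condition: every vertex with no outgoing edge has color L. If u ∈ V satisfies c(u) = 0 (u is blue) and there is a directed path with ℓ edges from u to a vertex with no outgoing edge, then ℓ ≥ L/2 + 1. -/
/-- In a finite digraph with a Bender–Ron coloring `c : V → {0,1,…,L}`
satisfying the sink condition (every sink has color `L`), any directed path with `ℓ` edges
from a blue vertex to a sink satisfies `ℓ ≥ L/2 + 1`. -/
theorem blue_to_sink_long {V : Type*} [Fintype V]
    (E : V → V → Prop) (hirr : ∀ v, ¬ E v v)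
    (L : ℕ) (hLpos : 0 < L) (hLeven : Even L)
    (c : V → ℕ) (hcL : ∀ v, c v ≤ L)
    (hcol : ∀ u v, E u v →
      (c u = 0 ∧ c v = 0) ∨
      (c u = 0 ∧ 1 ≤ c v ∧ c v ≤ L / 2) ∨
      (1 ≤ c u ∧ c u < L ∧ c v = c u + 1))
    (hsink : ∀ v, (∀ x, ¬ E v x) → c v = L)
    (u v : V) (hcu : c u = 0)
    (ℓ : ℕ) (w : ℕ → V) (hw0 : w 0 = u) (hwℓ : w ℓ = v)
    (hinj : ∀ a ≤ ℓ, ∀ b ≤ ℓ, w a = w b → a = b)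
    (hedges : ∀ a < ℓ, E (w a) (w (a + 1)))
    (hvsink : ∀ x, ¬ E v x) :
    L / 2 + 1 ≤ ℓ := by
  have key : ∀ a ≤ ℓ, c (w a) = 0 ∨ c (w a) + 1 ≤ L / 2 + a := by
    intro a
    induction a with
    | zero => intro _; left; rw [hw0, hcu]
    | succ n ih =>
      intro hn
      have h1 := ih (by omega)
      have h2 := hcol _ _ (hedges n (by omega))
      omega
  have h := key ℓ le_rfl
  rw [hwℓ, hsink v hvsink] at h
  obtain ⟨k, hk⟩ := hLeven
  omega
end

section
/- Let V be a finite set and let F and S be two sets of directed edges on V (irreflexive subsets of V × V) such that: in the digraph (V,F) every vertex has in-degree at most 1, (V,F) has no directed cycle, and every directed path in (V,F) has at most D edges. Then for every vertex u ∈ V, the number of ancestors of u in the digraph (V, F ∪ S), i.e., the number of vertices v ≠ u admitting a directed path from v to u using edges of F ∪ S, is at most (|S| + 1)·(D + 1) − 1. -/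
/-- A directed path with `ℓ` edges along the edge relation `E`: a sequence
`w 0, w 1, …, w ℓ` of distinct vertices with consecutive edges. -/
def IsPathOn {V : Type*} (E : V → V → Prop) (ℓ : ℕ) (w : ℕ → V) : Prop :=
  (∀ a ≤ ℓ, ∀ b ≤ ℓ, w a = w b → a = b) ∧ ∀ a < ℓ, E (w a) (w (a + 1))

/-- Let `F` and `S` be edge sets on a finite vertex set `V` such that
`(V, F)` has in-degree at most 1, no directed cycle, and all directed paths of length at
most `D`.  Then every vertex of `(V, F ∪ S)` has at most `(|S| + 1)·(D + 1) - 1`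
ancestors. -/
theorem ancestors_bound {V : Type*} [Fintype V] [DecidableEq V]
    (F S : Finset (V × V))
    (hFirr : ∀ e ∈ F, e.1 ≠ e.2) (hSirr : ∀ e ∈ S, e.1 ≠ e.2)
    (hindeg : ∀ u u' v : V, (u, v) ∈ F → (u', v) ∈ F → u = u')
    (hacyc : Acyclic (fun u v => (u, v) ∈ F))
    (D : ℕ) (hD : ∀ (ℓ : ℕ) (w : ℕ → V), IsPathOn (fun u v => (u, v) ∈ F) ℓ w → ℓ ≤ D)
    (u : V) :
    {v : V | v ≠ u ∧ ∃ (ℓ : ℕ) (w : ℕ → V),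
        IsPathOn (fun a b => (a, b) ∈ F ∪ S) ℓ w ∧ w 0 = v ∧ w ℓ = u}.ncard
      ≤ (S.card + 1) * (D + 1) - 1 := by
  classical
  let p : V → V := fun y => if h : ∃ x, (x, y) ∈ F then h.choose else y
  have hp : ∀ x y, (x, y) ∈ F → p y = x := by
    intro x y hxy
    have h : ∃ x, (x, y) ∈ F := ⟨x, hxy⟩
    have h2 : p y = h.choose := dif_pos h
    rw [h2]
    exact hindeg _ _ _ h.choose_spec hxy
  let T : Finset V := insert u (S.image Prod.fst)
  have hT : T.card ≤ S.card + 1 :=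
    (Finset.card_insert_le _ _).trans (Nat.add_le_add_right Finset.card_image_le 1)
  let B : Finset V := (T ×ˢ Finset.range (D + 1)).image (fun q => p^[q.2] q.1)
  have hB : B.card ≤ (S.card + 1) * (D + 1) := by
    refine Finset.card_image_le.trans ?_
    rw [Finset.card_product, Finset.card_range]
    exact Nat.mul_le_mul_right _ hT
  have huB : u ∈ B := Finset.mem_image.2
    ⟨(u, 0), Finset.mem_product.2 ⟨Finset.mem_insert_self _ _, by simp⟩, rfl⟩
  have hsub : {v : V | v ≠ u ∧ ∃ (ℓ : ℕ) (w : ℕ → V),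
        IsPathOn (fun a b => (a, b) ∈ F ∪ S) ℓ w ∧ w 0 = v ∧ w ℓ = u}
      ⊆ ((B.erase u : Finset V) : Set V) := by
    rintro v ⟨hvu, ℓ, w, ⟨hinj, hedge⟩, h0, hl⟩
    have hex : ∃ m, w m ∈ T := ⟨ℓ, by rw [hl]; exact Finset.mem_insert_self _ _⟩
    obtain ⟨m, hm, hmin, hml⟩ : ∃ m, w m ∈ T ∧ (∀ a < m, w a ∉ T) ∧ m ≤ ℓ :=
      ⟨Nat.find hex, Nat.find_spec hex, fun a ha => Nat.find_min hex ha,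
        Nat.find_min' hex (by rw [hl]; exact Finset.mem_insert_self _ _)⟩
    have hF : ∀ a < m, (w a, w (a + 1)) ∈ F := by
      intro a ha
      rcases Finset.mem_union.1 (hedge a (by omega)) with h | h
      · exact h
      · exact absurd (Finset.mem_insert_of_mem (Finset.mem_image.2 ⟨_, h, rfl⟩)) (hmin a ha)
    have hmD : m ≤ D := hD m w
      ⟨fun a ha b hb => hinj a (ha.trans hml) b (hb.trans hml), hF⟩
    have hit : ∀ j ≤ m, p^[j] (w m) = w (m - j) := by
      intro j
      induction j with
      | zero => intro _; rfl
      | succ j ih =>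
        intro hj
        rw [Function.iterate_succ_apply', ih (by omega)]
        apply hp
        have := hF (m - (j + 1)) (by omega)
        rwa [show m - (j + 1) + 1 = m - j by omega] at this
    refine Finset.mem_coe.2 (Finset.mem_erase.2 ⟨hvu, Finset.mem_image.2
      ⟨(w m, m), Finset.mem_product.2 ⟨hm, Finset.mem_range.2 (by simpa using Nat.lt_succ_of_le hmD)⟩, ?_⟩⟩)
    have := hit m le_rfl
    simpa [h0] using this
  refine (Set.ncard_le_ncard hsub (Finset.finite_toSet _)).trans ?_
  rw [Set.ncard_coe_finset, Finset.card_erase_of_mem huB]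
  exact Nat.sub_le_sub_right hB 1
end

section
/- Let (Ω, μ) be a probability space, let n ≥ 1, let X_1, …, X_n : Ω → {0,1} be random variables, and let p ∈ (0,1]. Suppose that for every q ∈ {1,…,n} and every vector b = (b_1,…,b_{q−1}) ∈ {0,1}^{q−1} such that μ(X_1 = b_1, …, X_{q−1} = b_{q−1}) > 0, the conditional probability μ(X_q = 1 | X_1 = b_1, …, X_{q−1} = b_{q−1}) is at most p. Then μ(X_1 + ⋯ + X_n ≥ 2pn) ≤ exp(−pn/3). -/
open MeasureTheory ProbabilityTheory

/-- The partial exponential weight `2 ^ (∑_{j ≥ k} X j)`. -/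
noncomputable def chernoffW {Ω : Type*} {n : ℕ} (X : Fin n → Ω → ℝ) (k : ℕ) (ω : Ω) : ENNReal :=
  ∏ j : Fin n, if k ≤ j.val then ENNReal.ofReal (Real.exp (Real.log 2 * X j ω)) else 1

lemma chernoffW_succ {Ω : Type*} {n : ℕ} (X : Fin n → Ω → ℝ) (k : ℕ) (hk : k < n) (ω : Ω) :
    chernoffW X k ω =
      ENNReal.ofReal (Real.exp (Real.log 2 * X ⟨k, hk⟩ ω)) * chernoffW X (k + 1) ω := by
  unfold chernoffW
  have h1 : ENNReal.ofReal (Real.exp (Real.log 2 * X ⟨k, hk⟩ ω)) =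
      ∏ j : Fin n, if j = ⟨k, hk⟩ then ENNReal.ofReal (Real.exp (Real.log 2 * X j ω)) else 1 := by
    rw [Finset.prod_ite_eq' Finset.univ (⟨k, hk⟩ : Fin n)]
    simp
  rw [h1, ← Finset.prod_mul_distrib]
  refine Finset.prod_congr rfl fun j _ => ?_
  by_cases hj : j = ⟨k, hk⟩
  · subst hj
    simp
  · have hj' : j.val ≠ k := fun h => hj (Fin.ext h)
    by_cases hl : k ≤ j.val
    · have : k + 1 ≤ j.val := by omega
      simp [hj, hl, this]
    · have : ¬ k + 1 ≤ j.val := by omega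
      simp [hj, hl, this]

lemma chernoffW_measurable {Ω : Type*} [MeasurableSpace Ω] {n : ℕ} (X : Fin n → Ω → ℝ)
    (hmeas : ∀ q, Measurable (X q)) (k : ℕ) : Measurable (chernoffW X k) := by
  unfold chernoffW
  refine Finset.measurable_prod _ fun j _ => ?_
  split_ifs
  · have := hmeas j
    fun_prop
  · exact measurable_const

lemma chernoff_aux {Ω : Type*} [MeasurableSpace Ω]
    (μ : Measure Ω) [IsProbabilityMeasure μ]
    (n : ℕ)
    (X : Fin n → Ω → ℝ) (hmeas : ∀ q, Measurable (X q))
    (h01 : ∀ q ω, X q ω = 0 ∨ X q ω = 1)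
    (p : ℝ)
    (hcond : ∀ q : Fin n, ∀ b : Fin n → ℝ, (∀ j, b j = 0 ∨ b j = 1) →
      μ {ω | ∀ j, j < q → X j ω = b j} ≠ 0 →
      ProbabilityTheory.cond μ {ω | ∀ j, j < q → X j ω = b j} {ω | X q ω = 1}
        ≤ ENNReal.ofReal p) (m : ℕ) :
    ∀ k : ℕ, k + m = n → ∀ b : Fin n → ℝ, (∀ j, b j = 0 ∨ b j = 1) →
      ∫⁻ ω in {ω | ∀ j : Fin n, j.val < k → X j ω = b j}, chernoffW X k ω ∂μ
        ≤ (1 + ENNReal.ofReal p) ^ m * μ {ω | ∀ j : Fin n, j.val < k → X j ω = b j} := by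
  have hA : ∀ (k : ℕ) (b : Fin n → ℝ),
      MeasurableSet {ω | ∀ j : Fin n, j.val < k → X j ω = b j} := by
    intro k b
    simp only [Set.setOf_forall]
    exact MeasurableSet.iInter fun j => MeasurableSet.iInter fun _ =>
      hmeas j (measurableSet_singleton (b j))
  induction m with
  | zero =>
    intro k hk b _
    have : ∀ ω, chernoffW X k ω = 1 := by
      intro ω
      unfold chernoffW
      refine Finset.prod_eq_one fun j _ => ?_
      have := j.isLt
      rw [if_neg (by omega)]
    simp [this]
  | succ m ih =>
    intro k hk b hb
    have hkn : k < n := by omega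
    set q : Fin n := ⟨k, hkn⟩ with hq
    set A := {ω | ∀ j : Fin n, j.val < k → X j ω = b j} with hAdef
    have hAm : MeasurableSet A := hA k b
    set B := {ω | X q ω = 1} with hB
    have hBm : MeasurableSet B := hmeas q (measurableSet_singleton 1)
    have key : ∀ c : ℝ, {ω | ∀ j : Fin n, j.val < k + 1 → X j ω = Function.update b q c j}
        = A ∩ {ω | X q ω = c} := by
      intro c
      ext ω
      simp only [hAdef, Set.mem_setOf_eq, Set.mem_inter_iff]
      constructor
      · intro h
        refine ⟨fun j hj => ?_, ?_⟩
        · have h2 := h j (by omega)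
          rwa [Function.update_of_ne (by rintro rfl; simp [hq] at hj)] at h2
        · have h2 := h q (by simp [hq])
          simpa using h2
      · rintro ⟨h1, h2⟩ j hj
        by_cases hjq : j = q
        · rw [hjq]; simpa using h2
        · rw [Function.update_of_ne hjq]
          have : j.val ≠ k := fun h => hjq (Fin.ext h)
          exact h1 j (by omega)
    have hupd : ∀ c : ℝ, (c = 0 ∨ c = 1) → ∀ j, Function.update b q c j = 0 ∨
        Function.update b q c j = 1 := by
      intro c hc j
      by_cases hjq : j = q
      · rw [hjq]; simpa using hc
      · rw [Function.update_of_ne hjq]; exact hb j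
    have h0 := ih (k + 1) (by omega) _ (hupd 0 (Or.inl rfl))
    have h1 := ih (k + 1) (by omega) _ (hupd 1 (Or.inr rfl))
    rw [key] at h0 h1
    have hdiff : A ∩ {ω | X q ω = 0} = A \ B := by
      ext ω
      simp only [hB, Set.mem_inter_iff, Set.mem_setOf_eq, Set.mem_diff]
      rcases h01 q ω with h | h <;> simp [h]
    rw [hdiff] at h0
    have hp : μ (A ∩ B) ≤ ENNReal.ofReal p * μ A := by
      by_cases hz : μ A = 0
      · rw [measure_mono_null Set.inter_subset_left hz]; exact zero_le
      · have h := hcond q b hb hz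
        change ProbabilityTheory.cond μ A B ≤ _ at h
        rw [← cond_mul_eq_inter hAm]
        gcongr
    have e1 : ∫⁻ ω in A ∩ B, chernoffW X k ω ∂μ
        = 2 * ∫⁻ ω in A ∩ B, chernoffW X (k + 1) ω ∂μ := by
      rw [← lintegral_const_mul _ (chernoffW_measurable X hmeas _)]
      refine setLIntegral_congr_fun (hAm.inter hBm) fun ω hω => ?_
      have hx : X ⟨k, hkn⟩ ω = 1 := hω.2
      simp only [chernoffW_succ X k hkn ω, hx]
      rw [mul_one, Real.exp_log two_pos]
      simp
    have e0 : ∫⁻ ω in A \ B, chernoffW X k ω ∂μ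
        = ∫⁻ ω in A \ B, chernoffW X (k + 1) ω ∂μ := by
      refine setLIntegral_congr_fun (hAm.diff hBm) fun ω hω => ?_
      have hx : X ⟨k, hkn⟩ ω = 0 := (h01 q ω).resolve_right hω.2
      simp only [chernoffW_succ X k hkn ω, hx]
      simp
    rw [← lintegral_inter_add_diff _ A hBm, e1, e0]
    calc _ ≤ 2 * ((1 + ENNReal.ofReal p) ^ m * μ (A ∩ B))
          + (1 + ENNReal.ofReal p) ^ m * μ (A \ B) := by
            gcongr
      _ = (1 + ENNReal.ofReal p) ^ m * ((μ (A ∩ B) + μ (A \ B)) + μ (A ∩ B)) := by ring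
      _ = (1 + ENNReal.ofReal p) ^ m * (μ A + μ (A ∩ B)) := by
            rw [measure_inter_add_diff A hBm]
      _ ≤ (1 + ENNReal.ofReal p) ^ m * (μ A + ENNReal.ofReal p * μ A) := by gcongr
      _ = _ := by ring

/-- upper-tail Chernoff bound for conditionally dominated Bernoulli
variables.  If `X 1, …, X n` are `{0,1}`-valued random variables on a probability space
`(Ω, μ)` such that, conditioned on any possible outcome of the preceding variables,
`X q = 1` has probability at most `p`, then `μ(X 1 + ⋯ + X n ≥ 2pn) ≤ exp(-pn/3)`. -/
theorem chernoff_upper_tail_conditional {Ω : Type*} [MeasurableSpace Ω]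
    (μ : Measure Ω) [IsProbabilityMeasure μ]
    (n : ℕ) (hn : 1 ≤ n)
    (X : Fin n → Ω → ℝ) (hmeas : ∀ q, Measurable (X q))
    (h01 : ∀ q ω, X q ω = 0 ∨ X q ω = 1)
    (p : ℝ) (hp0 : 0 < p) (hp1 : p ≤ 1)
    (hcond : ∀ q : Fin n, ∀ b : Fin n → ℝ, (∀ j, b j = 0 ∨ b j = 1) →
      μ {ω | ∀ j, j < q → X j ω = b j} ≠ 0 →
      ProbabilityTheory.cond μ {ω | ∀ j, j < q → X j ω = b j} {ω | X q ω = 1}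
        ≤ ENNReal.ofReal p) :
    μ {ω | 2 * p * n ≤ ∑ q, X q ω} ≤ ENNReal.ofReal (Real.exp (-(p * n) / 3)) := by
  have hmain := chernoff_aux μ n X hmeas h01 p hcond n 0 (by omega) (fun _ => 0)
    (fun _ => Or.inl rfl)
  simp only [Nat.not_lt_zero, false_imp_iff, implies_true, Set.setOf_true,
    Measure.restrict_univ, measure_univ, mul_one] at hmain
  have hW : ∀ ω, chernoffW X 0 ω = ENNReal.ofReal (Real.exp (Real.log 2 * ∑ q, X q ω)) := by
    intro ω
    simp only [chernoffW, Nat.zero_le, if_true]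
    rw [← ENNReal.ofReal_prod_of_nonneg (fun _ _ => (Real.exp_pos _).le), ← Real.exp_sum,
      Finset.mul_sum]
  have hlog : 0 < Real.log 2 := Real.log_pos one_lt_two
  set a : ℝ := Real.exp (Real.log 2 * (2 * p * n)) with ha
  have hapos : 0 < a := Real.exp_pos _
  have hmk := mul_meas_ge_le_lintegral (μ := μ) (chernoffW_measurable X hmeas 0) (ENNReal.ofReal a)
  have hsub : μ {ω | 2 * p * n ≤ ∑ q, X q ω} ≤ μ {ω | ENNReal.ofReal a ≤ chernoffW X 0 ω} := by
    refine measure_mono fun ω hω => ?_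
    simp only [Set.mem_setOf_eq] at hω ⊢
    rw [hW]
    exact ENNReal.ofReal_le_ofReal (Real.exp_le_exp.2 (mul_le_mul_of_nonneg_left hω hlog.le))
  have hpow : (1 + ENNReal.ofReal p) ^ n ≤ ENNReal.ofReal (Real.exp (p * n)) := by
    rw [← ENNReal.ofReal_one, ← ENNReal.ofReal_add zero_le_one hp0.le,
      ← ENNReal.ofReal_pow (by linarith)]
    refine ENNReal.ofReal_le_ofReal ?_
    rw [mul_comm, Real.exp_nat_mul]
    exact pow_le_pow_left₀ (by linarith) (by linarith [Real.add_one_le_exp p]) n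
  have hfin : ENNReal.ofReal a * μ {ω | 2 * p * n ≤ ∑ q, X q ω}
      ≤ ENNReal.ofReal a * ENNReal.ofReal (Real.exp (-(p * n) / 3)) := by
    calc _ ≤ ENNReal.ofReal a * μ {ω | ENNReal.ofReal a ≤ chernoffW X 0 ω} := by gcongr
      _ ≤ ENNReal.ofReal (Real.exp (p * n)) := hmk.trans (hmain.trans hpow)
      _ ≤ _ := by
        rw [← ENNReal.ofReal_mul hapos.le, ha, ← Real.exp_add]
        refine ENNReal.ofReal_le_ofReal (Real.exp_le_exp.2 ?_)
        have hpn : 0 ≤ p * n := by positivity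
        nlinarith [Real.log_two_gt_d9]
  exact (ENNReal.mul_le_mul_iff_right (by simpa using hapos) ENNReal.ofReal_ne_top).1 hfin
end
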